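/- The series identity ∑_{n≥1} (−1/27)^n · ((1)_n)^2 / ((1/3)_n (2/3)_n) · (7n − 2)/(n² (2n−1)) = −π²/12 holds. -/

import Mathlib

/-- The rising factorial (Pochhammer symbol) `(a)ₙ = a(a+1)⋯(a+n-1)`. -/
noncomputable def risingFactorial (a : ℝ) (n : ℕ) : ℝ :=
  ∏ i ∈ Finset.range n, (a + i)

open Filter Topology
open scoped Nat
open Nat (factorial_succ factorial_zero factorial_pos factorial_mul_factorial_dvd_factorial_add)

theorem risingFactorial_one (n : ℕ) : risingFactorial 1 n = n ! := by
  induction n with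
  | zero => simp [risingFactorial]
  | succ n ih =>
    rw [risingFactorial] at ih
    rw [risingFactorial, Finset.prod_range_succ, ih, factorial_succ]
    push_cast
    ring

theorem risingFactorial_third_mul_two_thirds (n : ℕ) :
    risingFactorial (1 / 3) n * risingFactorial (2 / 3) n * n ! * 27 ^ n = (3 * n)! := by
  induction n with
  | zero => simp [risingFactorial]
  | succ n ih =>
    rw [risingFactorial, risingFactorial] at ih
    rw [risingFactorial, risingFactorial, Finset.prod_range_succ, Finset.prod_range_succ,
      show 3 * (n + 1) = 3 * n + 1 + 1 + 1 by ring]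
    simp only [factorial_succ]
    push_cast
    rw [← ih]
    ring

/-- The hypergeometric kernel of the Wilf–Zeilberger pair. -/
noncomputable def wzKernel (n k : ℕ) : ℝ :=
  ((2 * n)! : ℝ) ^ 2 * n ! * k ! * ((n + k)! : ℝ) ^ 2 /
    ((3 * n + k + 1)! * ((2 * n + k + 1)! : ℝ) ^ 2)

/-- First member of the Wilf–Zeilberger pair. -/
noncomputable def wzF (n k : ℕ) : ℝ :=
  (-1) ^ (n + k) * ((3 * n + 2 * k + 2) * wzKernel n k)

/-- The polynomial in the numerator of the certificate. -/
noncomputable def wzPoly (n k : ℝ) : ℝ :=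
  k ^ 5 + (14 * n + 11) * k ^ 4 + (77 * n ^ 2 + 123 * n + 48) * k ^ 3
    + (204 * n ^ 3 + 498 * n ^ 2 + 397 * n + 103) * k ^ 2
    + (248 * n ^ 4 + 824 * n ^ 3 + 1009 * n ^ 2 + 538 * n + 105) * k
    + 2 * (7 * n + 5) * (n + 1) * (2 * n + 1) * (2 * n + 2) ^ 2

/-- Second member of the Wilf–Zeilberger pair. -/
noncomputable def wzG (n k : ℕ) : ℝ :=
  (-1) ^ (n + k) * (wzKernel n k *
    (wzPoly n k / ((3 * n + k + 2) * (3 * n + k + 3) * (2 * n + k + 2) ^ 2)))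

theorem wzKernel_nonneg (n k : ℕ) : 0 ≤ wzKernel n k := by
  unfold wzKernel
  positivity

theorem wzKernel_succ_right (n k : ℕ) :
    wzKernel n (k + 1) = wzKernel n k * ((k + 1) * (n + k + 1) ^ 2 /
      ((3 * n + k + 2) * (2 * n + k + 2) ^ 2)) := by
  unfold wzKernel
  rw [show n + (k + 1) = n + k + 1 by ring, show 3 * n + (k + 1) + 1 = 3 * n + k + 1 + 1 by ring,
    show 2 * n + (k + 1) + 1 = 2 * n + k + 1 + 1 by ring, factorial_succ k,
    factorial_succ (n + k), factorial_succ (3 * n + k + 1), factorial_succ (2 * n + k + 1)]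
  push_cast
  rw [div_mul_div_comm]
  congr 1 <;> ring

theorem wzKernel_succ_left (n k : ℕ) :
    wzKernel (n + 1) k = wzKernel n k *
      ((n + 1) * (n + k + 1) ^ 2 * (2 * n + 1) ^ 2 * (2 * n + 2) ^ 2 /
      ((3 * n + k + 2) * (3 * n + k + 3) * (3 * n + k + 4) *
        ((2 * n + k + 2) ^ 2 * (2 * n + k + 3) ^ 2))) := by
  unfold wzKernel
  rw [show n + 1 + k = n + k + 1 by ring,
    show 3 * (n + 1) + k + 1 = 3 * n + k + 1 + 1 + 1 + 1 by ring,
    show 2 * (n + 1) + k + 1 = 2 * n + k + 1 + 1 + 1 by ring,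
    show 2 * (n + 1) = 2 * n + 1 + 1 by ring, factorial_succ n,
    factorial_succ (n + k), factorial_succ (3 * n + k + 1 + 1 + 1),
    factorial_succ (3 * n + k + 1 + 1), factorial_succ (3 * n + k + 1),
    factorial_succ (2 * n + k + 1 + 1), factorial_succ (2 * n + k + 1),
    factorial_succ (2 * n + 1), factorial_succ (2 * n)]
  push_cast
  rw [div_mul_div_comm]
  congr 1 <;> ring

theorem wzF_succ_sub (n k : ℕ) : wzF (n + 1) k - wzF n k = wzG n (k + 1) - wzG n k := by
  unfold wzF wzG
  rw [wzKernel_succ_left, wzKernel_succ_right]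
  have h : wzKernel n k * (-(3 * n + 2 * k + 5) *
      ((n + 1) * (n + k + 1) ^ 2 * (2 * n + 1) ^ 2 * (2 * n + 2) ^ 2 /
      ((3 * n + k + 2) * (3 * n + k + 3) * (3 * n + k + 4) *
        ((2 * n + k + 2) ^ 2 * (2 * n + k + 3) ^ 2))) - (3 * n + 2 * k + 2)) =
      wzKernel n k * (-((k + 1) * (n + k + 1) ^ 2 / ((3 * n + k + 2) * (2 * n + k + 2) ^ 2) *
      (wzPoly n (k + 1) / ((3 * n + k + 3) * (3 * n + k + 4) * (2 * n + k + 3) ^ 2))) -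
      wzPoly n k / ((3 * n + k + 2) * (3 * n + k + 3) * (2 * n + k + 2) ^ 2)) := by
    congr 1
    unfold wzPoly
    field_simp
    ring
  rw [show n + 1 + k = n + k + 1 by ring, show n + (k + 1) = n + k + 1 by ring, pow_succ]
  push_cast
  rw [show (3 * n + (k + 1) + 2 : ℝ) = 3 * n + k + 3 by ring,
    show (3 * n + (k + 1) + 3 : ℝ) = 3 * n + k + 4 by ring,
    show (2 * n + (k + 1) + 2 : ℝ) = 2 * n + k + 3 by ring,
    show (3 * (n + 1) + 2 * k + 2 : ℝ) = 3 * n + 2 * k + 5 by ring]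
  linear_combination (-1) ^ (n + k) * h

theorem wzKernel_le (n k : ℕ) :
    wzKernel n k ≤ 1 / ((2 * n + k + 1) ^ 2 * (3 * n + k + 1)) := by
  have key (a b : ℕ) : (a ! * b ! : ℝ) ≤ (a + b)! := by
    exact_mod_cast Nat.le_of_dvd (factorial_pos _) (factorial_mul_factorial_dvd_factorial_add a b)
  have h₁ := key (2 * n) k
  have h₂ := key n (n + k)
  have h₃ := key (2 * n) (n + k)
  rw [show n + (n + k) = 2 * n + k by ring] at h₂
  rw [show 2 * n + (n + k) = 3 * n + k by ring] at h₃
  unfold wzKernel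
  rw [factorial_succ (3 * n + k), factorial_succ (2 * n + k), div_le_div_iff₀ (by positivity)
    (by positivity)]
  push_cast
  calc ((2 * n)! : ℝ) ^ 2 * n ! * k ! * ((n + k)! : ℝ) ^ 2 *
        ((2 * n + k + 1) ^ 2 * (3 * n + k + 1))
      = (((2 * n)! * k ! : ℝ) * (n ! * (n + k)!) * ((2 * n)! * (n + k)!)) *
        ((2 * n + k + 1) ^ 2 * (3 * n + k + 1)) := by ring
    _ ≤ ((2 * n + k)! * (2 * n + k)! * (3 * n + k)! : ℝ) *
        ((2 * n + k + 1) ^ 2 * (3 * n + k + 1)) := by gcongr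
    _ = _ := by ring

theorem abs_wzF_le (n k : ℕ) : |wzF n k| ≤ 2 / (2 * n + k + 1 : ℝ) ^ 2 := by
  have h₀ := wzKernel_nonneg n k
  rw [wzF, abs_mul, abs_pow, abs_neg, abs_one, one_pow, one_mul, abs_of_nonneg (by positivity)]
  calc (3 * n + 2 * k + 2) * wzKernel n k
      ≤ (2 * (3 * n + k + 1)) * (1 / ((2 * n + k + 1) ^ 2 * (3 * n + k + 1))) := by
        gcongr
        · linarith [(Nat.cast_nonneg n : (0 : ℝ) ≤ n)]
        · exact wzKernel_le n k
    _ = _ := by field_simp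

theorem summable_const_div_succ_sq (c : ℝ) : Summable fun k : ℕ ↦ c / (k + 1 : ℝ) ^ 2 := by
  have h := (summable_nat_add_iff 1).2 (Real.summable_one_div_nat_pow.2 one_lt_two)
  refine (h.mul_left c).congr fun k ↦ ?_
  push_cast
  ring

theorem abs_wzF_le_dominating (n k : ℕ) : |wzF n k| ≤ 2 / (k + 1 : ℝ) ^ 2 := by
  refine (abs_wzF_le n k).trans ?_
  gcongr
  linarith [(Nat.cast_nonneg n : (0 : ℝ) ≤ n)]

theorem summable_wzF (n : ℕ) : Summable (wzF n) :=
  .of_norm_bounded (summable_const_div_succ_sq 2) (abs_wzF_le_dominating n)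

theorem tendsto_const_div_succ_sq (c : ℝ) :
    Tendsto (fun k : ℕ ↦ c / (k + 1 : ℝ) ^ 2) atTop (𝓝 0) :=
  (summable_const_div_succ_sq c).tendsto_atTop_zero

theorem tendsto_tsum_wzF : Tendsto (fun n ↦ ∑' k, wzF n k) atTop (𝓝 0) := by
  rw [← tsum_zero (α := ℝ) (β := ℕ)]
  refine tendsto_tsum_of_dominated_convergence (summable_const_div_succ_sq 2) (fun k ↦ ?_)
    (.of_forall abs_wzF_le_dominating)
  refine squeeze_zero_norm (fun n ↦ (abs_wzF_le n k).trans ?_) (tendsto_const_div_succ_sq 2)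
  gcongr
  linarith [(Nat.cast_nonneg n : (0 : ℝ) ≤ n), (Nat.cast_nonneg k : (0 : ℝ) ≤ k)]

theorem wzPoly_le {n k : ℝ} (hn : 0 ≤ n) (hk : 0 ≤ k) :
    wzPoly n k ≤ wzPoly n 1 * (k + 1) ^ 5 := by
  have hp (j : ℕ) (hj : j ≤ 5) : k ^ j ≤ (k + 1) ^ 5 :=
    (pow_le_pow_left₀ hk (by linarith) j).trans (pow_le_pow_right₀ (by linarith) hj)
  unfold wzPoly
  calc _ = 1 * k ^ 5 + (14 * n + 11) * k ^ 4 + (77 * n ^ 2 + 123 * n + 48) * k ^ 3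
        + (204 * n ^ 3 + 498 * n ^ 2 + 397 * n + 103) * k ^ 2
        + (248 * n ^ 4 + 824 * n ^ 3 + 1009 * n ^ 2 + 538 * n + 105) * k ^ 1
        + 2 * (7 * n + 5) * (n + 1) * (2 * n + 1) * (2 * n + 2) ^ 2 * k ^ 0 := by ring
    _ ≤ 1 * (k + 1) ^ 5 + (14 * n + 11) * (k + 1) ^ 5
        + (77 * n ^ 2 + 123 * n + 48) * (k + 1) ^ 5
        + (204 * n ^ 3 + 498 * n ^ 2 + 397 * n + 103) * (k + 1) ^ 5
        + (248 * n ^ 4 + 824 * n ^ 3 + 1009 * n ^ 2 + 538 * n + 105) * (k + 1) ^ 5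
        + 2 * (7 * n + 5) * (n + 1) * (2 * n + 1) * (2 * n + 2) ^ 2 * (k + 1) ^ 5 := by
      gcongr ?_ * ?_ + ?_ * ?_ + ?_ * ?_ + ?_ * ?_ + ?_ * ?_ + ?_ * ?_ <;>
        exact hp _ (by norm_num)
    _ = _ := by ring

theorem tendsto_wzG (n : ℕ) : Tendsto (wzG n) atTop (𝓝 0) := by
  refine squeeze_zero_norm (fun k ↦ ?_) (tendsto_const_div_succ_sq (wzPoly n 1))
  have h₀ := wzKernel_nonneg n k
  have hP (x : ℝ) (hx : 0 ≤ x) : 0 ≤ wzPoly n x := by unfold wzPoly; positivity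
  have h₁ := hP k (by positivity)
  have h₂ := hP 1 zero_le_one
  rw [wzG, Real.norm_eq_abs, abs_mul, abs_pow, abs_neg, abs_one, one_pow, one_mul,
    abs_of_nonneg (by positivity)]
  have hn : (0 : ℝ) ≤ n := by positivity
  calc wzKernel n k *
      (wzPoly n k / ((3 * n + k + 2) * (3 * n + k + 3) * (2 * n + k + 2) ^ 2))
      ≤ (1 / ((k + 1) ^ 2 * (k + 1))) *
        (wzPoly n 1 * (k + 1) ^ 5 / ((k + 1) * (k + 1) * (k + 1) ^ 2)) := by
        gcongr
        · refine (wzKernel_le n k).trans ?_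
          gcongr <;> linarith
        · exact wzPoly_le hn (by positivity)
        all_goals linarith
    _ = _ := by field_simp

theorem tsum_wzF_sub_succ (n : ℕ) : ∑' k, wzF n k - ∑' k, wzF (n + 1) k = wzG n 0 := by
  have h := ((summable_wzF (n + 1)).hasSum.sub (summable_wzF n).hasSum).tendsto_sum_nat
  simp only [wzF_succ_sub, Finset.sum_range_sub] at h
  have := tendsto_nhds_unique h ((tendsto_wzG n).sub_const (wzG n 0))
  linarith

theorem wzG_zero (n : ℕ) :
    wzG n 0 = (-1) ^ n * (wzKernel n 0 * (2 * (7 * n + 5) * (2 * n + 1) / (3 * (3 * n + 2)))) := by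
  unfold wzG wzPoly
  simp only [add_zero, Nat.cast_zero]
  congr 2
  field_simp
  ring

theorem summable_wzG_zero : Summable fun n ↦ wzG n 0 := by
  refine .of_norm_bounded (summable_const_div_succ_sq 4) fun n ↦ ?_
  have h₀ := wzKernel_nonneg n 0
  rw [wzG_zero, Real.norm_eq_abs, abs_mul, abs_pow, abs_neg, abs_one, one_pow, one_mul,
    abs_of_nonneg (by positivity)]
  have h := wzKernel_le n 0
  have hn : (0 : ℝ) ≤ n := by positivity
  simp only [Nat.cast_zero, add_zero] at h
  calc wzKernel n 0 * (2 * (7 * n + 5) * (2 * n + 1) / (3 * (3 * n + 2)))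
      ≤ 1 / ((2 * n + 1) ^ 2 * (3 * n + 1)) *
        (2 * (7 * n + 5) * (2 * n + 1) / (3 * (3 * n + 2))) := by gcongr
    _ = 2 * (7 * n + 5) / (3 * (3 * n + 2)) / ((2 * n + 1) * (3 * n + 1)) := by field_simp
    _ ≤ 4 / ((n + 1) * (n + 1)) := by
        gcongr ?_ / (?_ * ?_)
        · rw [div_le_iff₀ (by positivity)]
          linarith
        all_goals linarith
    _ = _ := by rw [sq]

theorem hasSum_wzG_zero : HasSum (fun n ↦ wzG n 0) (∑' k, wzF 0 k) := by
  rw [summable_wzG_zero.hasSum_iff_tendsto_nat]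
  simp only [← tsum_wzF_sub_succ, Finset.sum_range_sub']
  simpa using tendsto_tsum_wzF.const_sub (∑' k, wzF 0 k)

theorem hasSum_alternating_inv_sq :
    HasSum (fun n : ℕ ↦ (-1 : ℝ) ^ n / (n + 1 : ℝ) ^ 2) (Real.pi ^ 2 / 12) := by
  have hz := hasSum_zeta_two
  have he : HasSum (fun n : ℕ ↦ if Even n then 1 / (n : ℝ) ^ 2 else 0)
      (1 / 4 * (Real.pi ^ 2 / 6)) := by
    rw [← (mul_right_injective₀ (two_ne_zero' ℕ)).hasSum_iff]
    · convert! hz.mul_left (1 / 4) using 2 with n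
      simp only [Function.comp_apply, even_two_mul, if_true]
      push_cast
      ring
    · intro n hn
      rw [if_neg]
      rintro ⟨m, rfl⟩
      exact hn ⟨m, by ring⟩
  have h := hz.sub (he.mul_left 2)
  rw [← hasSum_nat_add_iff' 1] at h
  have hs : Real.pi ^ 2 / 6 - 2 * (1 / 4 * (Real.pi ^ 2 / 6)) - ∑ i ∈ Finset.range 1,
      (1 / (i : ℝ) ^ 2 - 2 * if Even i then 1 / (i : ℝ) ^ 2 else 0) = Real.pi ^ 2 / 12 := by
    simp
    ring
  rw [hs] at h
  convert! h using 2 with n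
  rcases Nat.even_or_odd n with hn | hn
  · rw [if_neg (by simpa [Nat.even_add_one] using hn), hn.neg_one_pow]
    push_cast
    ring
  · rw [if_pos (by simpa [Nat.even_add_one] using hn), hn.neg_one_pow]
    push_cast
    ring

theorem tsum_wzF_zero : ∑' k, wzF 0 k = Real.pi ^ 2 / 6 := by
  have h := (hasSum_alternating_inv_sq.mul_left 2).tsum_eq
  rw [show Real.pi ^ 2 / 6 = 2 * (Real.pi ^ 2 / 12) by ring, ← h]
  congr 1 with k
  unfold wzF wzKernel
  simp only [mul_zero, zero_add, factorial_zero, factorial_succ]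
  push_cast
  field_simp
  ring

theorem summand_eq_wzG (n : ℕ) :
    (-1 / 27 : ℝ) ^ (n + 1) * (risingFactorial 1 (n + 1)) ^ 2 /
        (risingFactorial (1 / 3) (n + 1) * risingFactorial (2 / 3) (n + 1)) *
        ((7 * ((n : ℝ) + 1) - 2) / (((n : ℝ) + 1) ^ 2 * (2 * ((n : ℝ) + 1) - 1)))
      = -1 / 2 * wzG n 0 := by
  have h := risingFactorial_third_mul_two_thirds (n + 1)
  have hr : risingFactorial (1 / 3) (n + 1) * risingFactorial (2 / 3) (n + 1) =
      (3 * (n + 1))! / ((n + 1)! * 27 ^ (n + 1)) := by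
    rw [← h]
    field_simp
  rw [hr, risingFactorial_one, wzG_zero, wzKernel, div_pow,
    show 3 * (n + 1) = 3 * n + 1 + 1 + 1 by ring, show (2 * (n + 1 : ℝ) - 1) = 2 * n + 1 by ring]
  simp only [add_zero, factorial_succ, factorial_zero]
  push_cast
  field_simp
  ring

/-- `∑_{n≥1} (−1/27)^n (1)ₙ²/((1/3)ₙ(2/3)ₙ) (7n−2)/(n²(2n−1)) = −π²/12`. -/
theorem pi2_12_series :
    ∑' n : ℕ, ((-1 / 27 : ℝ) ^ (n + 1) * (risingFactorial 1 (n + 1)) ^ 2 /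
        (risingFactorial (1 / 3) (n + 1) * risingFactorial (2 / 3) (n + 1)) *
        ((7 * ((n : ℝ) + 1) - 2) / (((n : ℝ) + 1) ^ 2 * (2 * ((n : ℝ) + 1) - 1))))
      = -Real.pi ^ 2 / 12 := by
  simp only [summand_eq_wzG]
  rw [(hasSum_wzG_zero.mul_left (-1 / 2)).tsum_eq, tsum_wzF_zero]
  ring
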